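/- Let 0 < θ < 1/2. There exists a constant C, depending only on θ, such that every w ∈ H¹(T̂) with |w|_{1+θ,T̂} < ∞ that admits a representative continuous on the closure of T̂ and vanishing at the three points (0,0), (1,0), (0,1) satisfies, for that continuous representative and all x, y in the closure of T̂: |w(x) − w(y)| ≤ C · |x − y|^θ · |w|_{1+θ,T̂}. -/

import Mathlib

open MeasureTheory Metric Set Filter
open scoped Topology NNReal ENNReal

noncomputable section

abbrev E2 := EuclideanSpace ℝ (Fin 2)

/-- Squared Gagliardo seminorm of order `s` on `G ⊆ ℝ²`. -/
def gagSq (s : ℝ) (G : Set E2) (v : E2 → ℝ) : ℝ :=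
  ∫ x in G, ∫ y in G, (v x - v y) ^ 2 / dist x y ^ (2 + 2 * s)

/-- Finiteness of the Gagliardo seminorm. -/
def GagFin (s : ℝ) (G : Set E2) (v : E2 → ℝ) : Prop :=
  Integrable (fun p : E2 × E2 => (v p.1 - v p.2) ^ 2 / dist p.1 p.2 ^ (2 + 2 * s))
    ((volume.restrict G).prod (volume.restrict G))

/-- Test functions: smooth compactly supported functions with support in `G`. -/
def IsTestFun (G : Set E2) (φ : E2 → ℝ) : Prop :=
  ContDiff ℝ (⊤ : ℕ∞) φ ∧ HasCompactSupport φ ∧ tsupport φ ⊆ G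

/-- Partial derivative in the `i`-th coordinate direction. -/
def pd (i : Fin 2) (f : E2 → ℝ) (x : E2) : ℝ := fderiv ℝ f x (EuclideanSpace.single i 1)

/-- Weak partial derivative on an open set. -/
def HasWeakPD (G : Set E2) (i : Fin 2) (v g : E2 → ℝ) : Prop :=
  ∀ φ : E2 → ℝ, IsTestFun G φ →
    (∫ x in G, v x * pd i φ x) = - ∫ x in G, g x * φ x

/-- The open reference triangle with vertices `(0,0)`, `(1,0)`, `(0,1)`. -/
def refTri : Set E2 := {x : E2 | 0 < x 0 ∧ 0 < x 1 ∧ x 0 + x 1 < 1}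

/-- Closed triangle in coordinates. -/
def cTri : Set E2 := {x : E2 | 0 ≤ x 0 ∧ 0 ≤ x 1 ∧ x 0 + x 1 ≤ 1}

lemma cont_coord (i : Fin 2) : Continuous (fun x : E2 => x i) := by fun_prop

lemma isOpen_refTri : IsOpen refTri := by
  have h0 := cont_coord 0
  have h1 := cont_coord 1
  exact (isOpen_lt continuous_const h0).inter
    ((isOpen_lt continuous_const h1).inter (isOpen_lt (h0.add h1) continuous_const))

lemma isClosed_cTri : IsClosed cTri := by
  have h0 := cont_coord 0
  have h1 := cont_coord 1
  exact (isClosed_le continuous_const h0).inter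
    ((isClosed_le continuous_const h1).inter (isClosed_le (h0.add h1) continuous_const))

lemma refTri_sub_cTri : refTri ⊆ cTri := fun _ hx => ⟨hx.1.le, hx.2.1.le, hx.2.2.le⟩

lemma closure_sub_cTri : closure refTri ⊆ cTri :=
  closure_minimal refTri_sub_cTri isClosed_cTri

lemma mix_mem {p z : E2} (hp : p ∈ cTri) (hz : z ∈ refTri) {t : ℝ} (ht : 0 < t) (ht1 : t ≤ 1) :
    p + t • (z - p) ∈ refTri := by
  obtain ⟨a, b, c⟩ := hp
  obtain ⟨a', b', c'⟩ := hz
  have h1 : 0 ≤ 1 - t := by linarith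
  have e : ∀ i, (p + t • (z - p)) i = (1 - t) * p i + t * z i := by
    intro i; simp; ring
  refine ⟨?_, ?_, ?_⟩
  · rw [e]; nlinarith [mul_nonneg h1 a, mul_pos ht a']
  · rw [e]; nlinarith [mul_nonneg h1 b, mul_pos ht b']
  · rw [e, e]; nlinarith [mul_nonneg h1 (sub_nonneg.2 c), mul_pos ht (sub_pos.2 c')]

lemma mix_mem_c {p z : E2} (hp : p ∈ cTri) (hz : z ∈ cTri) {t : ℝ} (ht : 0 ≤ t) (ht1 : t ≤ 1) :
    p + t • (z - p) ∈ cTri := by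
  obtain ⟨a, b, c⟩ := hp
  obtain ⟨a', b', c'⟩ := hz
  have h1 : 0 ≤ 1 - t := by linarith
  have e : ∀ i, (p + t • (z - p)) i = (1 - t) * p i + t * z i := by
    intro i; simp; ring
  refine ⟨?_, ?_, ?_⟩
  · rw [e]; nlinarith [mul_nonneg h1 a, mul_nonneg ht a']
  · rw [e]; nlinarith [mul_nonneg h1 b, mul_nonneg ht b']
  · rw [e, e]; nlinarith [mul_nonneg h1 (sub_nonneg.2 c), mul_nonneg ht (sub_nonneg.2 c')]

lemma cTri_coord {p z : E2} (hp : p ∈ cTri) (hz : z ∈ cTri) (i : Fin 2) : |z i - p i| ≤ 1 := by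
  obtain ⟨a, b, c⟩ := hp
  obtain ⟨a', b', c'⟩ := hz
  fin_cases i
  · simp only [Fin.zero_eta]; rw [abs_le]; constructor <;> linarith
  · simp only [Fin.mk_one]; rw [abs_le]; constructor <;> linarith

lemma cTri_dist {p z : E2} (hp : p ∈ cTri) (hz : z ∈ cTri) : dist p z ≤ 2 := by
  rw [EuclideanSpace.dist_eq, Real.sqrt_le_left (by norm_num)]
  have h0 := cTri_coord hz hp 0
  have h1 := cTri_coord hz hp 1
  simp only [Fin.sum_univ_two, Real.dist_eq, sq_abs]
  nlinarith [sq_abs (p 0 - z 0), sq_abs (p 1 - z 1), abs_nonneg (p 0 - z 0), abs_nonneg (p 1 - z 1)]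

lemma coord_le_dist (p z : E2) (i : Fin 2) : |z i - p i| ≤ dist p z := by
  have := PiLp.norm_apply_le (z - p) i
  rw [dist_comm, dist_eq_norm]
  simpa using this

lemma bounded_cTri : Bornology.IsBounded cTri := by
  have h0 : (0 : E2) ∈ cTri := by simp [cTri]
  exact (isBounded_closedBall (x := (0 : E2)) (r := 2)).subset
    fun z hz => by rw [mem_closedBall]; exact cTri_dist hz h0

lemma isCompact_cTri : IsCompact cTri := isCompact_of_isClosed_isBounded isClosed_cTri bounded_cTri

instance finite_refTri : IsFiniteMeasure (volume.restrict refTri) := by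
  refine ⟨?_⟩
  rw [Measure.restrict_apply_univ]
  exact (bounded_cTri.subset refTri_sub_cTri).measure_lt_top

/-- Properties of the averaging kernel. -/
structure IsKer (Φ : E2 → ℝ) (B : ℝ) : Prop where
  smooth : ContDiff ℝ (⊤ : ℕ∞) Φ
  cpt : HasCompactSupport Φ
  supp : tsupport Φ ⊆ refTri
  nonneg : ∀ x, 0 ≤ Φ x
  le : ∀ x, Φ x ≤ B
  one : ∫ x, Φ x = 1
  Bpos : 0 < B

lemma exists_ker : ∃ Φ B, IsKer Φ B := by
  let c : E2 := !₂[1/4, 1/4]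
  let f : ContDiffBump c := ⟨1/8, 1/5, by norm_num, by norm_num⟩
  have hc : HasCompactSupport (f.normed volume) := f.hasCompactSupport_normed
  have hs : ContDiff ℝ (⊤ : ℕ∞) (f.normed volume) := f.contDiff_normed
  obtain ⟨B, hB⟩ := hs.continuous.bounded_above_of_compact_support hc
  refine ⟨f.normed volume, max B 1, hs, hc, ?_, f.nonneg_normed, ?_, f.integral_normed, by positivity⟩
  · rw [f.tsupport_normed_eq]
    intro x hx
    have h0 := (coord_le_dist x c 0).trans hx
    have h1 := (coord_le_dist x c 1).trans hx
    simp only [c, f] at h0 h1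
    rw [abs_le] at h0 h1
    simp at h0 h1
    refine ⟨?_, ?_, ?_⟩ <;> linarith [h0.1, h0.2, h1.1, h1.2]
  · intro x
    exact ((le_abs_self _).trans (hB x)).trans (le_max_left _ _)

/-- Rescaled kernel. -/
def kr (Φ : E2 → ℝ) (p : E2) (t : ℝ) (x : E2) : ℝ := (t ^ 2)⁻¹ * Φ (p + t⁻¹ • (x - p))

lemma kr_one (Φ : E2 → ℝ) (p : E2) : kr Φ p 1 = Φ := by
  funext x; simp [kr]

lemma supp_mem {Φ : E2 → ℝ} {B : ℝ} (hΦ : IsKer Φ B) {p : E2} {t : ℝ} (ht : 0 < t)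
    {x : E2} (hx : Φ (p + t⁻¹ • (x - p)) ≠ 0) :
    ∃ z ∈ tsupport Φ, x = p + t • (z - p) := by
  refine ⟨_, subset_tsupport _ hx, ?_⟩
  simp [smul_smul, ht.ne']

lemma supp_mem_tri {Φ : E2 → ℝ} {B : ℝ} (hΦ : IsKer Φ B) {p : E2} (hp : p ∈ cTri) {t : ℝ}
    (ht : 0 < t) (ht1 : t ≤ 1)
    {x : E2} (hx : Φ (p + t⁻¹ • (x - p)) ≠ 0) : x ∈ refTri := by
  obtain ⟨z, hz, rfl⟩ := supp_mem hΦ ht hx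
  exact mix_mem hp (hΦ.supp hz) ht ht1

lemma supp_dist {Φ : E2 → ℝ} {B : ℝ} (hΦ : IsKer Φ B) {p : E2} (hp : p ∈ cTri) {t : ℝ}
    (ht : 0 < t)
    {x : E2} (hx : Φ (p + t⁻¹ • (x - p)) ≠ 0) : dist x p ≤ 2 * t := by
  obtain ⟨z, hz, rfl⟩ := supp_mem hΦ ht hx
  have := cTri_dist (refTri_sub_cTri (hΦ.supp hz)) hp
  rw [dist_eq_norm] at *
  rw [add_sub_cancel_left, norm_smul, Real.norm_of_nonneg ht.le]
  nlinarith

lemma supp_coord {Φ : E2 → ℝ} {B : ℝ} (hΦ : IsKer Φ B) {p : E2} (hp : p ∈ cTri) {t : ℝ}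
    (ht : 0 < t) (i : Fin 2)
    {x : E2} (hx : Φ (p + t⁻¹ • (x - p)) ≠ 0) : |x i - p i| ≤ t := by
  obtain ⟨z, hz, rfl⟩ := supp_mem hΦ ht hx
  have := cTri_coord hp (refTri_sub_cTri (hΦ.supp hz)) i
  simp only [PiLp.add_apply, PiLp.smul_apply, PiLp.sub_apply, smul_eq_mul, add_sub_cancel_left]
  rw [abs_mul, abs_of_pos ht]
  nlinarith

lemma isTest {Φ : E2 → ℝ} {B : ℝ} (hΦ : IsKer Φ B) {p : E2} (hp : p ∈ cTri) {t : ℝ}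
    (ht : 0 < t) (ht1 : t ≤ 1) {a : E2 → ℝ} (ha : ContDiff ℝ (⊤ : ℕ∞) a) :
    IsTestFun refTri (fun x => a x * Φ (p + t⁻¹ • (x - p))) := by
  have hK : IsCompact ((fun z => p + t • (z - p)) '' tsupport Φ) :=
    hΦ.cpt.isCompact.image (by fun_prop)
  have hsub : Function.support (fun x => a x * Φ (p + t⁻¹ • (x - p))) ⊆
      (fun z => p + t • (z - p)) '' tsupport Φ := by
    intro x hx
    obtain ⟨z, hz, h⟩ := supp_mem hΦ (p := p) ht (x := x) (fun h => hx (by simp [h]))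
    exact ⟨z, hz, h.symm⟩
  refine ⟨?_, HasCompactSupport.of_support_subset_isCompact hK hsub, ?_⟩
  · have := hΦ.smooth
    fun_prop
  · refine (closure_minimal hsub hK.isClosed).trans ?_
    rintro _ ⟨z, hz, rfl⟩
    exact mix_mem hp (hΦ.supp hz) ht ht1

lemma scaled_integral (f : E2 → ℝ) (p : E2) {t : ℝ} (ht : 0 < t) :
    ∫ x, (t ^ 2)⁻¹ * f (p + t⁻¹ • (x - p)) = ∫ x, f x := by
  rw [integral_const_mul, integral_sub_right_eq_self (fun x => f (p + t⁻¹ • x)) p,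
    Measure.integral_comp_inv_smul volume (fun x => f (p + x)), integral_add_left_eq_self f p]
  simp
  field_simp

lemma kr_nonneg {Φ : E2 → ℝ} {B : ℝ} (hΦ : IsKer Φ B) (p : E2) (t : ℝ) (x : E2) :
    0 ≤ kr Φ p t x := mul_nonneg (by positivity) (hΦ.nonneg _)

lemma kr_le {Φ : E2 → ℝ} {B : ℝ} (hΦ : IsKer Φ B) (p : E2) (t : ℝ) (x : E2) :
    kr Φ p t x ≤ B * (t ^ 2)⁻¹ := by
  rw [kr, mul_comm]
  exact mul_le_mul_of_nonneg_right (hΦ.le _) (by positivity)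

lemma kr_cont {Φ : E2 → ℝ} {B : ℝ} (hΦ : IsKer Φ B) (p : E2) (t : ℝ) :
    Continuous (kr Φ p t) := by
  have := hΦ.smooth.continuous
  unfold kr
  fun_prop

lemma kr_ne {Φ : E2 → ℝ} {p : E2} {t : ℝ} {x : E2} (h : kr Φ p t x ≠ 0) :
    Φ (p + t⁻¹ • (x - p)) ≠ 0 := fun h' => h (by simp [kr, h'])

lemma kr_int {Φ : E2 → ℝ} {B : ℝ} (hΦ : IsKer Φ B) {p : E2} (hp : p ∈ cTri) {t : ℝ}
    (ht : 0 < t) (ht1 : t ≤ 1) : ∫ x in refTri, kr Φ p t x = 1 := by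
  rw [setIntegral_eq_integral_of_forall_compl_eq_zero, ← hΦ.one]
  · exact scaled_integral Φ p ht
  · intro x hx
    by_contra h
    exact hx (supp_mem_tri hΦ hp ht ht1 (kr_ne h))

lemma kr_moment {Φ : E2 → ℝ} {B : ℝ} (hΦ : IsKer Φ B) {p : E2} (hp : p ∈ cTri) {t : ℝ}
    (ht : 0 < t) (ht1 : t ≤ 1) (i : Fin 2) :
    ∫ x in refTri, (t⁻¹ * (x i - p i)) * kr Φ p t x = (∫ x, x i * Φ x) - p i := by
  rw [setIntegral_eq_integral_of_forall_compl_eq_zero]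
  · have := scaled_integral (fun z => (z i - p i) * Φ z) p ht
    have e : ∫ x, (t⁻¹ * (x i - p i)) * kr Φ p t x = ∫ x, (x i - p i) * Φ x := by
      rw [← this]
      congr 1
      funext x
      simp [kr]
      ring
    rw [e]
    have h0 := hΦ.smooth.continuous
    have h1 : Integrable (fun x : E2 => x i * Φ x) :=
      Continuous.integrable_of_hasCompactSupport (by fun_prop) hΦ.cpt.mul_left
    have h2 : Integrable Φ := h0.integrable_of_hasCompactSupport hΦ.cpt
    simp_rw [sub_mul]
    rw [integral_sub h1 (h2.const_mul _), integral_const_mul, hΦ.one, mul_one]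
  · intro x hx
    by_contra h
    exact hx (supp_mem_tri hΦ hp ht ht1 (kr_ne (right_ne_zero_of_mul h)))

/-- A probability density on the triangle. -/
structure IsDens (ρ : E2 → ℝ) (b : ℝ) : Prop where
  cont : Continuous ρ
  nonneg : ∀ x, 0 ≤ ρ x
  le : ∀ x, ρ x ≤ b
  one : ∫ x in refTri, ρ x = 1

lemma IsDens.norm_le {ρ : E2 → ℝ} {b : ℝ} (h : IsDens ρ b) (x : E2) : ‖ρ x‖ ≤ b := by
  rw [Real.norm_of_nonneg (h.nonneg x)]; exact h.le x

lemma IsDens.integrable {ρ : E2 → ℝ} {b : ℝ} (h : IsDens ρ b) :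
    Integrable ρ (volume.restrict refTri) :=
  Integrable.of_bound h.cont.aestronglyMeasurable b (Eventually.of_forall h.norm_le)

lemma IsDens.mul_integrable {ρ : E2 → ℝ} {b : ℝ} (h : IsDens ρ b) {g : E2 → ℝ}
    (hg : Integrable g (volume.restrict refTri)) :
    Integrable (fun x => g x * ρ x) (volume.restrict refTri) :=
  hg.mul_bdd h.cont.aestronglyMeasurable (Eventually.of_forall h.norm_le)

lemma D_integrable {g ρ₁ ρ₂ : E2 → ℝ} {b b' : ℝ} (hg : Integrable g (volume.restrict refTri))
    (h₁ : IsDens ρ₁ b) (h₂ : IsDens ρ₂ b') :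
    Integrable (fun q : E2 × E2 => |g q.1 - g q.2| * (ρ₁ q.1 * ρ₂ q.2))
      ((volume.restrict refTri).prod (volume.restrict refTri)) := by
  refine Integrable.mul_bdd (c := b * b') ((hg.comp_fst _).sub (hg.comp_snd _)).abs ?_ ?_
  · have := h₁.cont
    have := h₂.cont
    exact Continuous.aestronglyMeasurable (by fun_prop)
  · refine Eventually.of_forall fun q => ?_
    rw [norm_mul]
    exact mul_le_mul (h₁.norm_le _) (h₂.norm_le _) (norm_nonneg _)
      ((norm_nonneg _).trans (h₁.norm_le q.1))

lemma D_le {θ : ℝ} (hθ : 0 < θ) {g ρ₁ ρ₂ : E2 → ℝ} {b N R : ℝ}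
    (hg : Integrable g (volume.restrict refTri)) (hG : GagFin θ refTri g)
    (hN0 : 0 < N) (hN : gagSq θ refTri g ≤ N ^ 2) (hb : 0 < b) (hR : 0 < R)
    (h₁ : IsDens ρ₁ b) (h₂ : IsDens ρ₂ b)
    (hd : ∀ x y, ρ₁ x ≠ 0 → ρ₂ y ≠ 0 → dist x y ≤ R) :
    ∫ q, |g q.1 - g q.2| * (ρ₁ q.1 * ρ₂ q.2)
      ∂((volume.restrict refTri).prod (volume.restrict refTri)) ≤ b * R ^ (1 + θ) * N := by
  set S := R ^ (1 + θ) with hS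
  have hSpos : 0 < S := Real.rpow_pos_of_pos hR _
  have hS2 : S ^ 2 = R ^ (2 + 2 * θ) := by
    rw [hS, ← Real.rpow_natCast, ← Real.rpow_mul hR.le]; congr 1; push_cast; ring
  set l := b * S * N with hl
  have hlpos : 0 < l := by positivity
  have key : ∀ q : E2 × E2, |g q.1 - g q.2| * (ρ₁ q.1 * ρ₂ q.2) ≤
      (l / 2) * (ρ₁ q.1 * ρ₂ q.2) + (b ^ 2 * S ^ 2 / (2 * l)) *
        ((g q.1 - g q.2) ^ 2 / dist q.1 q.2 ^ (2 + 2 * θ)) := by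
    intro q
    have hq : 0 ≤ (g q.1 - g q.2) ^ 2 / dist q.1 q.2 ^ (2 + 2 * θ) := by positivity
    by_cases hz : ρ₁ q.1 * ρ₂ q.2 = 0
    · rw [hz]
      simp only [mul_zero, zero_add]
      positivity
    have hd' := hd q.1 q.2 (left_ne_zero_of_mul hz) (right_ne_zero_of_mul hz)
    have hr0 : 0 ≤ ρ₁ q.1 * ρ₂ q.2 := mul_nonneg (h₁.nonneg _) (h₂.nonneg _)
    have hr1 : ρ₁ q.1 * ρ₂ q.2 ≤ b ^ 2 := by
      rw [sq]; exact mul_le_mul (h₁.le _) (h₂.le _) (h₂.nonneg _) hb.le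
    have hu : (g q.1 - g q.2) ^ 2 ≤ S ^ 2 * ((g q.1 - g q.2) ^ 2 / dist q.1 q.2 ^ (2 + 2 * θ)) := by
      rcases eq_or_lt_of_le (dist_nonneg (x := q.1) (y := q.2)) with h | h
      · have : q.1 = q.2 := dist_eq_zero.1 h.symm
        simp [this]
      · have hp : 0 < dist q.1 q.2 ^ (2 + 2 * θ) := Real.rpow_pos_of_pos h _
        rw [hS2, mul_div_assoc', le_div_iff₀ hp, mul_comm]
        exact mul_le_mul_of_nonneg_right
          (Real.rpow_le_rpow h.le hd' (by positivity)) (sq_nonneg _)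
    have h3 : |g q.1 - g q.2| ≤ l / 2 + (g q.1 - g q.2) ^ 2 / (2 * l) := by
      rw [← sub_nonneg]
      have : l / 2 + (g q.1 - g q.2) ^ 2 / (2 * l) - |g q.1 - g q.2| =
          (l - |g q.1 - g q.2|) ^ 2 / (2 * l) := by
        rw [← sq_abs (g q.1 - g q.2)]; field_simp; ring
      rw [this]; positivity
    calc |g q.1 - g q.2| * (ρ₁ q.1 * ρ₂ q.2)
        ≤ (l / 2 + (g q.1 - g q.2) ^ 2 / (2 * l)) * (ρ₁ q.1 * ρ₂ q.2) :=
          mul_le_mul_of_nonneg_right h3 hr0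
      _ = (l / 2) * (ρ₁ q.1 * ρ₂ q.2) + (g q.1 - g q.2) ^ 2 / (2 * l) * (ρ₁ q.1 * ρ₂ q.2) := by ring
      _ ≤ (l / 2) * (ρ₁ q.1 * ρ₂ q.2) +
          (S ^ 2 * ((g q.1 - g q.2) ^ 2 / dist q.1 q.2 ^ (2 + 2 * θ))) / (2 * l) * b ^ 2 := by
          gcongr
      _ = _ := by ring
  have hi1 : Integrable (fun q : E2 × E2 => ρ₁ q.1 * ρ₂ q.2)
      ((volume.restrict refTri).prod (volume.restrict refTri)) := h₁.integrable.mul_prod h₂.integrable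
  refine (integral_mono (D_integrable hg h₁ h₂)
    ((hi1.const_mul (l / 2)).add (Integrable.const_mul hG (b ^ 2 * S ^ 2 / (2 * l)))) key).trans ?_
  simp only [Pi.add_apply]
  rw [integral_add (hi1.const_mul (l / 2)) (Integrable.const_mul hG (b ^ 2 * S ^ 2 / (2 * l))),
    integral_const_mul, integral_const_mul, integral_prod_mul, h₁.one, h₂.one, integral_prod _ hG]
  change l / 2 * (1 * 1) + b ^ 2 * S ^ 2 / (2 * l) * gagSq θ refTri g ≤ l
  have : b ^ 2 * S ^ 2 / (2 * l) * gagSq θ refTri g ≤ b ^ 2 * S ^ 2 / (2 * l) * N ^ 2 := by gcongr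
  have e : b ^ 2 * S ^ 2 / (2 * l) * N ^ 2 = l / 2 := by
    rw [hl]; field_simp
  linarith

lemma H_step {g ρ₁ ρ₂ : E2 → ℝ} {b b' : ℝ} (G : ℝ)
    (hg : Integrable g (volume.restrict refTri))
    (h₁ : IsDens ρ₁ b) (h₂ : IsDens ρ₂ b') :
    ∫ x in refTri, |g x - G| * ρ₁ x ≤
      (∫ q, |g q.1 - g q.2| * (ρ₁ q.1 * ρ₂ q.2)
        ∂((volume.restrict refTri).prod (volume.restrict refTri))) +
      ∫ x in refTri, |g x - G| * ρ₂ x := by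
  have hgG : Integrable (fun x => |g x - G|) (volume.restrict refTri) :=
    (hg.sub (integrable_const G)).abs
  have i1 := (h₁.mul_integrable hgG).mul_prod h₂.integrable
  have i2 := h₁.integrable.mul_prod (h₂.mul_integrable hgG)
  have e1 := integral_prod_mul (μ := volume.restrict refTri) (ν := volume.restrict refTri)
    (fun x => |g x - G| * ρ₁ x) ρ₂
  have e2 := integral_prod_mul (μ := volume.restrict refTri) (ν := volume.restrict refTri)
    ρ₁ (fun x => |g x - G| * ρ₂ x)
  rw [h₂.one, mul_one] at e1
  rw [h₁.one, one_mul] at e2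
  rw [← e1, ← e2, ← integral_add (D_integrable hg h₁ h₂) i2]
  refine integral_mono i1 ((D_integrable hg h₁ h₂).add i2) fun q => ?_
  have hr0 : 0 ≤ ρ₁ q.1 * ρ₂ q.2 := mul_nonneg (h₁.nonneg _) (h₂.nonneg _)
  have := mul_le_mul_of_nonneg_right (abs_sub_le (g q.1) (g q.2) G) hr0
  simp only [Pi.add_apply]
  linarith

lemma H_mean {g ρ : E2 → ℝ} {b : ℝ}
    (hg : Integrable g (volume.restrict refTri))
    (h : IsDens ρ b) :
    ∫ x in refTri, |g x - ∫ y in refTri, g y * ρ y| * ρ x ≤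
      (∫ q, |g q.1 - g q.2| * (ρ q.1 * ρ q.2)
        ∂((volume.restrict refTri).prod (volume.restrict refTri))) := by
  set G := ∫ y in refTri, g y * ρ y with hGdef
  have hgG : Integrable (fun x => |g x - G|) (volume.restrict refTri) :=
    (hg.sub (integrable_const G)).abs
  have iD := D_integrable hg h h
  rw [integral_prod _ iD]
  refine integral_mono (h.mul_integrable hgG) iD.integral_prod_left fun x => ?_
  have i3 : Integrable (fun y => (g x - g y) * ρ y) (volume.restrict refTri) :=
    h.mul_integrable ((integrable_const _).sub hg)
  have e : g x - G = ∫ y in refTri, (g x - g y) * ρ y := by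
    simp_rw [sub_mul]
    rw [integral_sub (h.integrable.const_mul _) (h.mul_integrable hg), integral_const_mul, h.one,
      mul_one]
  have e2 : ∫ y in refTri, |g x - g y| * (ρ x * ρ y) = (∫ y in refTri, |(g x - g y) * ρ y|) * ρ x := by
    rw [← integral_mul_const]
    congr 1
    funext y
    rw [abs_mul, abs_of_nonneg (h.nonneg y)]; ring
  simp only
  rw [e2, e]
  exact mul_le_mul_of_nonneg_right abs_integral_le_integral_abs (h.nonneg x)

lemma kr_dens {Φ : E2 → ℝ} {B : ℝ} (hΦ : IsKer Φ B) {p : E2} (hp : p ∈ cTri) {t : ℝ}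
    (ht : 0 < t) (ht1 : t ≤ 1) : IsDens (kr Φ p t) (B * (t ^ 2)⁻¹) :=
  ⟨kr_cont hΦ p t, kr_nonneg hΦ p t, kr_le hΦ p t, kr_int hΦ hp ht ht1⟩

lemma IsDens.mono {ρ : E2 → ℝ} {b b' : ℝ} (h : IsDens ρ b) (hb : b ≤ b') : IsDens ρ b' :=
  ⟨h.cont, h.nonneg, fun x => (h.le x).trans hb, h.one⟩

lemma D_kr {θ : ℝ} (hθ : 0 < θ) {Φ : E2 → ℝ} {B : ℝ} (hΦ : IsKer Φ B)
    {g : E2 → ℝ} {N : ℝ}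
    (hg : Integrable g (volume.restrict refTri)) (hG : GagFin θ refTri g)
    (hN0 : 0 < N) (hN : gagSq θ refTri g ≤ N ^ 2)
    {p : E2} (hp : p ∈ cTri) {t s : ℝ}
    (ht : 0 < t) (hts : t ≤ s) (hs2 : s ≤ 2 * t) (hs1 : s ≤ 1) :
    ∫ q, |g q.1 - g q.2| * (kr Φ p t q.1 * kr Φ p s q.2)
      ∂((volume.restrict refTri).prod (volume.restrict refTri)) ≤
      (B * 6 ^ (1 + θ) * N) * t ^ (θ - 1) := by
  have hs : 0 < s := ht.trans_le hts
  have hB := hΦ.Bpos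
  have hb : B * (s ^ 2)⁻¹ ≤ B * (t ^ 2)⁻¹ := by gcongr
  refine (D_le hθ hg hG hN0 hN (by positivity) (by positivity : 0 < 6 * t)
    (kr_dens hΦ hp ht (hts.trans hs1)) ((kr_dens hΦ hp hs hs1).mono hb) ?_).trans (le_of_eq ?_)
  · intro x y hx hy
    have h1 := supp_dist hΦ hp ht (kr_ne hx)
    have h2 := supp_dist hΦ hp hs (kr_ne hy)
    have := dist_triangle_right x y p
    linarith
  · rw [Real.mul_rpow (by norm_num) ht.le]
    have : t ^ (1 + θ) = t ^ (θ - 1) * t ^ 2 := by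
      rw [← Real.rpow_natCast, ← Real.rpow_add ht]; congr 1; push_cast; ring
    rw [this]
    field_simp

/-- The constant in the averaged gradient estimate. -/
def KH (θ B : ℝ) : ℝ := 2 * (B * 6 ^ (1 + θ)) / (1 - 2 ^ (θ - 1))

lemma q_lt {θ : ℝ} (hθ1 : θ < 1) : (2 : ℝ) ^ (θ - 1) < 1 :=
  Real.rpow_lt_one_of_one_lt_of_neg (by norm_num) (by linarith)

lemma KH_pos {θ B : ℝ} (hθ1 : θ < 1) (hB : 0 < B) : 0 < KH θ B := by
  have := q_lt hθ1
  unfold KH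
  have : 0 < 1 - (2 : ℝ) ^ (θ - 1) := by linarith
  positivity

lemma H_le {θ : ℝ} (hθ : 0 < θ) (hθ1 : θ < 1) {Φ : E2 → ℝ} {B : ℝ} (hΦ : IsKer Φ B)
    {g : E2 → ℝ} {N : ℝ}
    (hg : Integrable g (volume.restrict refTri)) (hG : GagFin θ refTri g)
    (hN0 : 0 < N) (hN : gagSq θ refTri g ≤ N ^ 2)
    {p : E2} (hp : p ∈ cTri) {t : ℝ} (ht : 0 < t) (ht1 : t ≤ 1) :
    ∫ x in refTri, |g x - ∫ y in refTri, g y * Φ y| * kr Φ p t x ≤ KH θ B * N * t ^ (θ - 1) := by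
  set G := ∫ y in refTri, g y * Φ y with hGd
  have hB := hΦ.Bpos
  have hq := q_lt hθ1
  have hq0 : (0 : ℝ) < 2 ^ (θ - 1) := by positivity
  set q : ℝ := 2 ^ (θ - 1) with hqd
  set A := B * 6 ^ (1 + θ) with hA
  have hApos : 0 < A := by positivity
  have h1q : 0 < 1 - q := by linarith
  have hK : KH θ B = 2 * A / (1 - q) := rfl
  have hK1 : 2 * A ≤ KH θ B := by
    rw [hK, le_div_iff₀ h1q]; nlinarith
  have hK2 : A + KH θ B * q ≤ KH θ B := by
    have : KH θ B * (1 - q) = 2 * A := by rw [hK]; field_simp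
    nlinarith
  have h1 : ∫ x in refTri, |g x - G| * Φ x ≤ A * N := by
    have hd : IsDens Φ (B * (1 ^ 2 : ℝ)⁻¹) := by
      have := kr_dens hΦ hp one_pos le_rfl
      rwa [kr_one] at this
    have h2 := D_kr hθ hΦ hg hG hN0 hN hp (t := 1) (s := 1) one_pos le_rfl (by norm_num) le_rfl
    rw [kr_one, Real.one_rpow, mul_one] at h2
    exact (H_mean hg hd).trans h2
  obtain ⟨n, hn⟩ : ∃ n : ℕ, (1 / 2 : ℝ) ^ (n + 1) ≤ t := by
    obtain ⟨n, hn⟩ := exists_pow_lt_of_lt_one ht (by norm_num : (1 / 2 : ℝ) < 1)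
    refine ⟨n, le_trans ?_ hn.le⟩
    exact pow_le_pow_of_le_one (by norm_num) (by norm_num) (Nat.le_succ n)
  induction n generalizing t with
  | zero =>
    norm_num at hn
    have h2 := D_kr hθ hΦ hg hG hN0 hN hp (t := t) (s := 1) ht ht1 (by linarith) le_rfl
    have h3 := H_step G hg (kr_dens hΦ hp ht ht1) (kr_dens hΦ hp one_pos le_rfl)
    rw [kr_one] at h2 h3
    have h4 : (1 : ℝ) ≤ t ^ (θ - 1) := Real.one_le_rpow_of_pos_of_le_one_of_nonpos ht ht1 (by linarith)
    have h5 : A * N ≤ A * N * t ^ (θ - 1) := le_mul_of_one_le_right (by positivity) h4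
    have h6 : 2 * A * (N * t ^ (θ - 1)) ≤ KH θ B * (N * t ^ (θ - 1)) :=
      mul_le_mul_of_nonneg_right hK1 (by positivity)
    linarith
  | succ n ih =>
    by_cases h : (1 / 2 : ℝ) ^ (n + 1) ≤ t
    · exact ih ht ht1 h
    push Not at h
    have ht2 : 2 * t ≤ 1 := by
      have : (1 / 2 : ℝ) ^ (n + 1) ≤ 1 / 2 := by
        rw [pow_succ]
        have := pow_le_one₀ (n := n) (by norm_num : (0 : ℝ) ≤ 1 / 2) (by norm_num)
        linarith
      linarith
    have h0 := ih (t := 2 * t) (by linarith) ht2 (by rw [pow_succ] at hn; linarith)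
    have h2 := D_kr hθ hΦ hg hG hN0 hN hp (t := t) (s := 2 * t) ht (by linarith) le_rfl ht2
    have h3 := H_step G hg (kr_dens hΦ hp ht ht1) (kr_dens hΦ hp (by linarith : 0 < 2 * t) ht2)
    rw [Real.mul_rpow (by norm_num) ht.le, ← hqd] at h0
    have h6 : (A + KH θ B * q) * (N * t ^ (θ - 1)) ≤ KH θ B * (N * t ^ (θ - 1)) :=
      mul_le_mul_of_nonneg_right hK2 (by positivity)
    linarith

lemma deriv_abstract {w : E2 → ℝ} {g : Fin 2 → E2 → ℝ}
    (hw : Integrable w (volume.restrict refTri))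
    (hwg : ∀ i, HasWeakPD refTri i w (g i))
    {κ κ' : ℝ → E2 → ℝ} {a b s₀ : ℝ} (hs : s₀ ∈ Ioo a b)
    (hc : ∀ s ∈ Ioo a b, Continuous (κ s))
    (hc' : ContinuousOn (fun q : ℝ × E2 => κ' q.1 q.2) (Icc a b ×ˢ cTri))
    (hd : ∀ s ∈ Ioo a b, ∀ x, HasDerivAt (fun s => κ s x) (κ' s x) s)
    {χ : Fin 2 → E2 → ℝ} (hχ : ∀ i, IsTestFun refTri (χ i))
    (he : ∀ x, κ' s₀ x = -∑ i, pd i (χ i) x) :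
    HasDerivAt (fun s => ∫ x in refTri, w x * κ s x)
      (∑ i, ∫ x in refTri, g i x * χ i x) s₀ := by
  have hmeas : MeasurableSet refTri := isOpen_refTri.measurableSet
  obtain ⟨M, hM⟩ := (isCompact_Icc.prod isCompact_cTri).exists_bound_of_continuousOn hc'
  obtain ⟨M', hM'⟩ := isCompact_cTri.exists_bound_of_continuousOn (hc s₀ hs).continuousOn
  have hpdc : ∀ i, Continuous (fun x => pd i (χ i) x) := fun i =>
    ((hχ i).1.continuous_fderiv (by simp)).clm_apply continuous_const
  have hc0 : Continuous (κ' s₀) := by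
    have : κ' s₀ = fun x => -∑ i, pd i (χ i) x := funext he
    rw [this]
    fun_prop
  have hmain := hasDerivAt_integral_of_dominated_loc_of_deriv_le
    (μ := volume.restrict refTri) (F := fun s x => w x * κ s x) (F' := fun s x => w x * κ' s x)
    (bound := fun x => |w x| * M) (s := Ioo a b) (x₀ := s₀) (Ioo_mem_nhds hs.1 hs.2)
    ?_ ?_ ?_ ?_ ?_ ?_
  · have h := hmain.2
    have e : ∫ x in refTri, w x * κ' s₀ x = ∑ i, ∫ x in refTri, g i x * χ i x := by
      have hi : ∀ i, Integrable (fun x => w x * pd i (χ i) x) (volume.restrict refTri) := by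
        intro i
        obtain ⟨m, hm⟩ := isCompact_cTri.exists_bound_of_continuousOn (hpdc i).continuousOn
        exact hw.mul_bdd (hpdc i).aestronglyMeasurable
          (ae_restrict_of_forall_mem hmeas fun x hx => hm x (refTri_sub_cTri hx))
      simp_rw [he, mul_neg, Finset.mul_sum]
      rw [integral_neg, integral_finsetSum _ (fun i _ => hi i), ← Finset.sum_neg_distrib]
      refine Finset.sum_congr rfl fun i _ => ?_
      rw [hwg i _ (hχ i), neg_neg]
    rwa [e] at h
  · filter_upwards [Ioo_mem_nhds hs.1 hs.2] with s hs
    exact hw.aestronglyMeasurable.mul (hc s hs).aestronglyMeasurable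
  · exact hw.mul_bdd (hc s₀ hs).aestronglyMeasurable
      (ae_restrict_of_forall_mem hmeas fun x hx => hM' x (refTri_sub_cTri hx))
  · exact hw.aestronglyMeasurable.mul hc0.aestronglyMeasurable
  · refine ae_restrict_of_forall_mem hmeas fun x hx s hs => ?_
    rw [norm_mul]
    exact mul_le_mul_of_nonneg_left
      (hM (s, x) ⟨Ioo_subset_Icc_self hs, refTri_sub_cTri hx⟩) (norm_nonneg _)
  · exact hw.abs.mul_const M
  · exact Eventually.of_forall fun x s hs => (hd s hs x).const_mul (w x)

lemma pd_test {Φ : E2 → ℝ} (hs : Differentiable ℝ Φ) (p : E2) (t α β : ℝ) (i : Fin 2) (x : E2) :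
    pd i (fun x => (α + β * (x i - p i)) * Φ (p + t⁻¹ • (x - p))) x =
      β * Φ (p + t⁻¹ • (x - p)) + (α + β * (x i - p i)) *
        (t⁻¹ * fderiv ℝ Φ (p + t⁻¹ • (x - p)) (EuclideanSpace.single i 1)) := by
  have h1 : HasFDerivAt (fun x : E2 => p + t⁻¹ • (x - p))
      (t⁻¹ • ContinuousLinearMap.id ℝ E2) x :=
    (((hasFDerivAt_id x).sub_const p).const_smul t⁻¹).const_add p
  have h2 := (hs (p + t⁻¹ • (x - p))).hasFDerivAt.comp x h1
  have h3 : HasFDerivAt (fun x : E2 => α + β * (x i - p i))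
      (β • (EuclideanSpace.proj i : E2 →L[ℝ] ℝ)) x :=
    ((((EuclideanSpace.proj i : E2 →L[ℝ] ℝ).hasFDerivAt).sub_const (p i)).const_mul β).const_add α
  have h4 := (h3.fun_mul h2).fderiv
  unfold pd
  simp only [Function.comp_def] at h4
  rw [h4]
  simp
  ring

lemma clm_eq_sum (D : E2 →L[ℝ] ℝ) (v : E2) :
    D v = ∑ i, v i * D (EuclideanSpace.single i 1) := by
  have : v = ∑ i, v i • (EuclideanSpace.single i (1 : ℝ) : E2) := by
    ext j
    fin_cases j <;> simp [Fin.sum_univ_two]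
  conv_lhs => rw [this]
  simp

lemma deriv_t {Φ : E2 → ℝ} {B : ℝ} (hΦ : IsKer Φ B) {w : E2 → ℝ} {g : Fin 2 → E2 → ℝ}
    (hw : Integrable w (volume.restrict refTri))
    (hwg : ∀ i, HasWeakPD refTri i w (g i))
    {p : E2} (hp : p ∈ cTri) {t : ℝ} (ht : 0 < t) (ht1 : t ≤ 1) :
    HasDerivAt (fun s => ∫ x in refTri, w x * kr Φ p s x)
      (∑ i, ∫ x in refTri, g i x * ((t⁻¹ * (x i - p i)) * kr Φ p t x)) t := by
  have hsm := hΦ.smooth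
  have hdiff : Differentiable ℝ Φ := hsm.differentiable (by simp)
  have hcont := hsm.continuous
  have hfd : Continuous (fderiv ℝ Φ) := hsm.continuous_fderiv (by simp)
  have main := deriv_abstract hw hwg (κ := fun s x => kr Φ p s x)
    (κ' := fun s x => -(2 * (s ^ 3)⁻¹ * Φ (p + s⁻¹ • (x - p)) +
      (s ^ 4)⁻¹ * fderiv ℝ Φ (p + s⁻¹ • (x - p)) (x - p)))
    (a := t / 2) (b := 2 * t) (s₀ := t) ⟨by linarith, by linarith⟩
    (fun s _ => kr_cont hΦ p s) ?_ ?_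
    (χ := fun i x => (0 + (t ^ 3)⁻¹ * (x i - p i)) * Φ (p + t⁻¹ • (x - p))) ?_ ?_
  · convert main using 5 with i hi x
    unfold kr
    field_simp
    ring
  · have hinv : ContinuousOn (fun q : ℝ × E2 => q.1⁻¹) (Icc (t / 2) (2 * t) ×ˢ cTri) :=
      continuousOn_fst.inv₀ fun q hq => by have := hq.1.1; linarith
    have hy : ContinuousOn (fun q : ℝ × E2 => p + q.1⁻¹ • (q.2 - p))
        (Icc (t / 2) (2 * t) ×ˢ cTri) :=
      continuousOn_const.add (hinv.smul (continuousOn_snd.sub continuousOn_const))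
    have h1 := hcont.comp_continuousOn hy
    have h2 := hfd.comp_continuousOn hy
    have h3 : ContinuousOn (fun q : ℝ × E2 => q.2 - p) (Icc (t / 2) (2 * t) ×ˢ cTri) :=
      continuousOn_snd.sub continuousOn_const
    simp_rw [← inv_pow]
    exact (((continuousOn_const.mul (hinv.pow 3)).mul h1).add
      ((hinv.pow 4).mul (h2.clm_apply h3))).neg
  · intro s hs x
    have hs0 : s ≠ 0 := by have := hs.1; intro h; linarith
    have h1 : HasDerivAt (fun s : ℝ => p + s⁻¹ • (x - p)) (-(s ^ 2)⁻¹ • (x - p)) s :=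
      ((hasDerivAt_inv hs0).smul_const (x - p)).const_add p
    have h2 := (hdiff (p + s⁻¹ • (x - p))).hasFDerivAt.comp_hasDerivAt s h1
    have h3 : HasDerivAt (fun s : ℝ => (s ^ 2)⁻¹) (-(2 * s) / (s ^ 2) ^ 2) s := by
      have := (hasDerivAt_pow 2 s).fun_inv (pow_ne_zero 2 hs0)
      simpa using this
    have h4 := h3.fun_mul h2
    unfold kr
    refine h4.congr_deriv ?_
    simp only [Function.comp_def, neg_smul, map_neg, map_smul, smul_eq_mul]
    field_simp
    ring
  · intro i
    exact isTest hΦ hp ht ht1 (by fun_prop)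
  · intro x
    simp_rw [pd_test hdiff]
    rw [clm_eq_sum _ (x - p)]
    simp only [Fin.sum_univ_two, PiLp.sub_apply]
    field_simp
    ring

lemma deriv_p {Φ : E2 → ℝ} {B : ℝ} (hΦ : IsKer Φ B) {w : E2 → ℝ} {g : Fin 2 → E2 → ℝ}
    (hw : Integrable w (volume.restrict refTri))
    (hwg : ∀ i, HasWeakPD refTri i w (g i))
    {p v : E2} {s₀ : ℝ} (hp : p + s₀ • v ∈ cTri) {t : ℝ} (ht : 0 < t) (ht1 : t ≤ 1) :
    HasDerivAt (fun s : ℝ => ∫ x in refTri, w x * kr Φ (p + s • v) t x)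
      (∑ i, ∫ x in refTri, g i x * (((1 - t) * v i) * kr Φ (p + s₀ • v) t x)) s₀ := by
  have hsm := hΦ.smooth
  have hdiff : Differentiable ℝ Φ := hsm.differentiable (by simp)
  have hcont := hsm.continuous
  have hfd : Continuous (fderiv ℝ Φ) := hsm.continuous_fderiv (by simp)
  have main := deriv_abstract hw hwg (κ := fun s x => kr Φ (p + s • v) t x)
    (κ' := fun s x => (t ^ 2)⁻¹ *
      fderiv ℝ Φ ((p + s • v) + t⁻¹ • (x - (p + s • v))) ((1 - t⁻¹) • v))
    (a := s₀ - 1) (b := s₀ + 1) (s₀ := s₀) ⟨by linarith, by linarith⟩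
    (fun s _ => kr_cont hΦ _ t) ?_ ?_
    (χ := fun i x => (((t ^ 2)⁻¹ * ((1 - t) * v i)) + 0 * (x i - (p + s₀ • v) i)) *
      Φ ((p + s₀ • v) + t⁻¹ • (x - (p + s₀ • v)))) ?_ ?_
  · convert main using 5 with i hi x
    unfold kr
    ring
  · have hy : Continuous (fun q : ℝ × E2 => (p + q.1 • v) + t⁻¹ • (q.2 - (p + q.1 • v))) := by
      fun_prop
    exact (continuous_const.mul ((hfd.comp hy).clm_apply continuous_const)).continuousOn
  · intro s hs x
    have h0 : HasDerivAt (fun s : ℝ => p + s • v) v s := by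
      simpa using ((hasDerivAt_id s).smul_const v).const_add p
    have h1 : HasDerivAt (fun s : ℝ => (p + s • v) + t⁻¹ • (x - (p + s • v)))
        ((1 - t⁻¹) • v) s := by
      have := h0.fun_add ((h0.const_sub x).fun_const_smul t⁻¹)
      refine this.congr_deriv ?_
      module
    have h2 := (hdiff ((p + s • v) + t⁻¹ • (x - (p + s • v)))).hasFDerivAt.comp_hasDerivAt s h1
    exact h2.const_mul _
  · intro i
    exact isTest hΦ hp ht ht1 (by fun_prop)
  · intro x
    simp_rw [pd_test hdiff]
    rw [map_smul, clm_eq_sum _ v]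
    simp only [Fin.sum_univ_two, smul_eq_mul]
    field_simp
    ring

lemma lim_kr {Φ : E2 → ℝ} {B : ℝ} (hΦ : IsKer Φ B) {w ψ : E2 → ℝ}
    (hw : Integrable w (volume.restrict refTri))
    (hψ : ContinuousOn ψ (closure refTri))
    (hae : ∀ᵐ x ∂(volume.restrict refTri), ψ x = w x) {p : E2} (hp : p ∈ closure refTri) :
    Tendsto (fun t => ∫ x in refTri, w x * kr Φ p t x) (𝓝[>] 0) (𝓝 (ψ p)) := by
  have hmeas : MeasurableSet refTri := isOpen_refTri.measurableSet
  have hpc := closure_sub_cTri hp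
  rw [Metric.tendsto_nhds]
  intro ε hε
  obtain ⟨δ, hδ, h⟩ := Metric.continuousWithinAt_iff.1 (hψ p hp) (ε / 2) (by positivity)
  have hδ' : (0 : ℝ) < min 1 (δ / 2) := by positivity
  filter_upwards [Ioo_mem_nhdsGT hδ'] with t ht
  have ht0 : 0 < t := ht.1
  have ht1 : t ≤ 1 := (ht.2.trans_le (min_le_left _ _)).le
  have ht2 : t < δ / 2 := ht.2.trans_le (min_le_right _ _)
  have hk := kr_dens hΦ hpc ht0 ht1
  have e : (∫ x in refTri, w x * kr Φ p t x) - ψ p =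
      ∫ x in refTri, (w x - ψ p) * kr Φ p t x := by
    simp_rw [sub_mul]
    rw [integral_sub (hk.mul_integrable hw) (hk.integrable.const_mul _), integral_const_mul, hk.one,
      mul_one]
  rw [Real.dist_eq, e, ← Real.norm_eq_abs]
  have hle : ‖∫ x in refTri, (w x - ψ p) * kr Φ p t x‖ ≤ ∫ x in refTri, (ε / 2) * kr Φ p t x := by
    refine norm_integral_le_of_norm_le (hk.integrable.const_mul _) ?_
    filter_upwards [hae, ae_restrict_mem hmeas] with x hx hxT
    rw [norm_mul, Real.norm_of_nonneg (hk.nonneg x)]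
    by_cases h0 : kr Φ p t x = 0
    · simp [h0]
    refine mul_le_mul_of_nonneg_right ?_ (hk.nonneg x)
    rw [← hx, ← dist_eq_norm]
    refine (h (subset_closure hxT) ?_).le
    have := supp_dist hΦ hpc ht0 (kr_ne h0)
    linarith
  rw [integral_const_mul, hk.one] at hle
  linarith

lemma oned {f f' : ℝ → ℝ} {θ M f0 h : ℝ} (hθ : 0 < θ) (hM : 0 ≤ M) (hh : 0 < h) (hh1 : h ≤ 1)
    (hd : ∀ t, 0 < t → t ≤ 1 → HasDerivAt f (f' t) t)
    (hb : ∀ t, 0 < t → t ≤ 1 → |f' t| ≤ M * t ^ (θ - 1))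
    (hl : Tendsto f (𝓝[>] 0) (𝓝 f0)) : |f h - f0| ≤ M / θ * h ^ θ := by
  have hl2 : Tendsto (fun e => |f h - f e|) (𝓝[>] 0) (𝓝 |f h - f0|) :=
    (tendsto_const_nhds.sub hl).abs
  refine le_of_tendsto hl2 ?_
  filter_upwards [Ioo_mem_nhdsGT hh] with e he
  have he0 : 0 < e := he.1
  have hB : ∀ x ∈ Icc e h, HasDerivAt (fun x => M / θ * (x ^ θ - e ^ θ)) (M * x ^ (θ - 1)) x := by
    intro x hx
    have hx0 : x ≠ 0 := (he0.trans_le hx.1).ne'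
    have := ((Real.hasDerivAt_rpow_const (p := θ) (Or.inl hx0)).sub_const (e ^ θ)).const_mul (M / θ)
    refine this.congr_deriv ?_
    field_simp
  have hf : ∀ x ∈ Icc e h, HasDerivAt (fun x => f x - f e) (f' x) x := fun x hx =>
    (hd x (he0.trans_le hx.1) (hx.2.trans hh1)).sub_const _
  have key := image_norm_le_of_norm_deriv_right_le_deriv_boundary' (f := fun x => f x - f e)
    (f' := f') (a := e) (b := h) (B := fun x => M / θ * (x ^ θ - e ^ θ))
    (B' := fun x => M * x ^ (θ - 1))
    (fun x hx => (hf x hx).continuousAt.continuousWithinAt)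
    (fun x hx => (hf x (Ico_subset_Icc_self hx)).hasDerivWithinAt)
    (by simp)
    (fun x hx => (hB x hx).continuousAt.continuousWithinAt)
    (fun x hx => (hB x (Ico_subset_Icc_self hx)).hasDerivWithinAt)
    (fun x hx => hb x (he0.trans_le hx.1) (hx.2.le.trans hh1))
    (right_mem_Icc.2 he.2.le)
  refine key.trans ?_
  have : 0 ≤ e ^ θ := by positivity
  exact mul_le_mul_of_nonneg_left (by linarith) (by positivity)

lemma weighted_le {u c ρ : E2 → ℝ} {b m : ℝ} (hρ : IsDens ρ b)
    (hu : Integrable u (volume.restrict refTri))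
    (hc : ∀ x, ρ x ≠ 0 → |c x| ≤ m) :
    |∫ x in refTri, u x * (c x * ρ x)| ≤ m * ∫ x in refTri, |u x| * ρ x := by
  rw [← integral_const_mul, ← Real.norm_eq_abs]
  refine norm_integral_le_of_norm_le ((hρ.mul_integrable hu.abs).const_mul m)
    (Eventually.of_forall fun x => ?_)
  by_cases h : ρ x = 0
  · simp [h]
  rw [Real.norm_eq_abs, abs_mul, abs_mul, abs_of_nonneg (hρ.nonneg x)]
  have := mul_le_mul_of_nonneg_right (hc x h) (mul_nonneg (abs_nonneg (u x)) (hρ.nonneg x))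
  linarith

lemma abs_avg_le {g ρ : E2 → ℝ} {b : ℝ} (G : ℝ) (hρ : IsDens ρ b)
    (hg : Integrable g (volume.restrict refTri)) :
    ∫ x in refTri, |g x| * ρ x ≤ |G| + ∫ x in refTri, |g x - G| * ρ x := by
  have hgG : Integrable (fun x => |g x - G|) (volume.restrict refTri) :=
    (hg.sub (integrable_const G)).abs
  have e : |G| = ∫ x in refTri, |G| * ρ x := by rw [integral_const_mul, hρ.one, mul_one]
  rw [e, ← integral_add (hρ.integrable.const_mul _) (hρ.mul_integrable hgG)]
  refine integral_mono (hρ.mul_integrable hg.abs)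
    ((hρ.integrable.const_mul _).add (hρ.mul_integrable hgG)) fun x => ?_
  have h1 : |g x| ≤ |G| + |g x - G| := by
    have := abs_add_le G (g x - G)
    rwa [add_sub_cancel] at this
  have := mul_le_mul_of_nonneg_right h1 (hρ.nonneg x)
  simp only [Pi.add_apply]
  linarith

lemma kr_coord {Φ : E2 → ℝ} {B : ℝ} (hΦ : IsKer Φ B) {p : E2} (hp : p ∈ cTri) {t : ℝ}
    (ht : 0 < t) (i : Fin 2) (x : E2) (hx : kr Φ p t x ≠ 0) : |t⁻¹ * (x i - p i)| ≤ 1 := by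
  have := supp_coord hΦ hp ht i (kr_ne hx)
  rw [abs_mul, abs_of_pos (inv_pos.2 ht), inv_mul_le_iff₀ ht, mul_one]
  exact this

/-- First step: distance to the affine function with the averaged gradient. -/
lemma stepA {θ : ℝ} (hθ : 0 < θ) (hθ1 : θ < 1) {Φ : E2 → ℝ} {B : ℝ} (hΦ : IsKer Φ B)
    {w ψ : E2 → ℝ} {g : Fin 2 → E2 → ℝ} {N : ℝ}
    (hw : Integrable w (volume.restrict refTri))
    (hwg : ∀ i, HasWeakPD refTri i w (g i))
    (hg : ∀ i, Integrable (g i) (volume.restrict refTri)) (hG : ∀ i, GagFin θ refTri (g i))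
    (hψ : ContinuousOn ψ (closure refTri))
    (hae : ∀ᵐ x ∂(volume.restrict refTri), ψ x = w x)
    (hN0 : 0 < N) (hN : ∀ i, gagSq θ refTri (g i) ≤ N ^ 2)
    {p : E2} (hp : p ∈ closure refTri) :
    |((∫ x in refTri, w x * Φ x) -
      ∑ i, (∫ y in refTri, g i y * Φ y) * ((∫ x, x i * Φ x) - p i)) - ψ p| ≤
      2 * (KH θ B * N) / θ := by
  have hpc := closure_sub_cTri hp
  have hKpos := KH_pos hθ1 hΦ.Bpos
  set G : Fin 2 → ℝ := fun i => ∫ y in refTri, g i y * Φ y with hGd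
  set L := ∑ i, G i * ((∫ x, x i * Φ x) - p i) with hL
  have h := oned (f := fun t => (∫ x in refTri, w x * kr Φ p t x) - t * L)
    (f' := fun t => (∑ i, ∫ x in refTri, g i x * ((t⁻¹ * (x i - p i)) * kr Φ p t x)) - L)
    (θ := θ) (M := 2 * (KH θ B * N)) (f0 := ψ p) (h := 1) hθ (by positivity) one_pos le_rfl
    ?_ ?_ ?_
  · simpa only [kr_one, one_mul, Real.one_rpow, mul_one] using h
  · intro t ht ht1
    have := (deriv_t hΦ hw hwg hpc ht ht1).fun_sub ((hasDerivAt_id t).mul_const L)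
    refine this.congr_deriv ?_
    rw [one_mul]
  · intro t ht ht1
    have hk := kr_dens hΦ hpc ht ht1
    have hmb : ∀ i, Integrable (fun x => (t⁻¹ * (x i - p i)) * kr Φ p t x)
        (volume.restrict refTri) := by
      intro i
      refine Integrable.of_bound (C := B * (t ^ 2)⁻¹) ?_ (Eventually.of_forall fun x => ?_)
      · have := hk.cont
        exact Continuous.aestronglyMeasurable (by fun_prop)
      · by_cases h : kr Φ p t x = 0
        · rw [h]; simp; have := hΦ.Bpos; positivity
        · rw [norm_mul]
          have h1 := kr_coord hΦ hpc ht i x h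
          have h2 := hk.norm_le x
          have := mul_le_mul h1 h2 (norm_nonneg _) zero_le_one
          rwa [one_mul] at this
    have hgm : ∀ i, Integrable (fun x => g i x * ((t⁻¹ * (x i - p i)) * kr Φ p t x))
        (volume.restrict refTri) := by
      intro i
      refine (hg i).mul_bdd (c := B * (t ^ 2)⁻¹) (hmb i).aestronglyMeasurable
        (Eventually.of_forall fun x => ?_)
      by_cases h : kr Φ p t x = 0
      · rw [h]; simp; have := hΦ.Bpos; positivity
      · rw [norm_mul]
        have h1 := kr_coord hΦ hpc ht i x h
        have h2 := hk.norm_le x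
        have := mul_le_mul h1 h2 (norm_nonneg _) zero_le_one
        rwa [one_mul] at this
    have e : (∑ i, ∫ x in refTri, g i x * ((t⁻¹ * (x i - p i)) * kr Φ p t x)) - L =
        ∑ i, ∫ x in refTri, (g i x - G i) * ((t⁻¹ * (x i - p i)) * kr Φ p t x) := by
      rw [hL, ← Finset.sum_sub_distrib]
      refine Finset.sum_congr rfl fun i _ => ?_
      simp_rw [sub_mul (g i _)]
      rw [integral_sub (hgm i) ((hmb i).const_mul _), integral_const_mul, kr_moment hΦ hpc ht ht1]
    simp only
    rw [e]
    refine (Finset.abs_sum_le_sum_abs _ _).trans ?_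
    have hi : ∀ i, |∫ x in refTri, (g i x - G i) * ((t⁻¹ * (x i - p i)) * kr Φ p t x)| ≤
        KH θ B * N * t ^ (θ - 1) := by
      intro i
      have h1 := weighted_le (u := fun x => g i x - G i) hk ((hg i).sub (integrable_const _))
        (kr_coord hΦ hpc ht i)
      rw [one_mul] at h1
      exact h1.trans (H_le hθ hθ1 hΦ (hg i) (hG i) hN0 (hN i) hpc ht ht1)
    rw [Fin.sum_univ_two]
    linarith [hi 0, hi 1]
  · have h1 := lim_kr hΦ hw hψ hae hp
    have h2 : Tendsto (fun t : ℝ => t * L) (𝓝[>] 0) (𝓝 0) := by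
      have : Tendsto (fun t : ℝ => t * L) (𝓝 0) (𝓝 (0 * L)) := tendsto_id.mul_const L
      rw [zero_mul] at this
      exact this.mono_left nhdsWithin_le_nhds
    simpa using h1.sub h2

/-- Core estimate with a positive majorant `N` of the seminorms. -/
lemma core {θ : ℝ} (hθ : 0 < θ) (hθ1 : θ < 1) {Φ : E2 → ℝ} {B : ℝ} (hΦ : IsKer Φ B)
    {w ψ : E2 → ℝ} {g : Fin 2 → E2 → ℝ} {N : ℝ}
    (hw : Integrable w (volume.restrict refTri))
    (hwg : ∀ i, HasWeakPD refTri i w (g i))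
    (hg : ∀ i, Integrable (g i) (volume.restrict refTri)) (hG : ∀ i, GagFin θ refTri (g i))
    (hψ : ContinuousOn ψ (closure refTri))
    (hae : ∀ᵐ x ∂(volume.restrict refTri), ψ x = w x)
    (hN0 : 0 < N) (hN : ∀ i, gagSq θ refTri (g i) ≤ N ^ 2)
    (hv0 : (0 : E2) ∈ closure refTri)
    (hv : ∀ i : Fin 2, (EuclideanSpace.single i 1 : E2) ∈ closure refTri)
    (hψ0 : ψ 0 = 0) (hψi : ∀ i : Fin 2, ψ (EuclideanSpace.single i 1) = 0)
    {x y : E2} (hx : x ∈ closure refTri) (hy : y ∈ closure refTri) :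
    |ψ x - ψ y| ≤ (4 * (KH θ B + 4 * KH θ B / θ) / θ + 4 * (KH θ B + 4 * KH θ B / θ)) *
      dist x y ^ θ * N := by
  have hKpos := KH_pos hθ1 hΦ.Bpos
  set K := KH θ B with hK
  set G : Fin 2 → ℝ := fun i => ∫ y in refTri, g i y * Φ y with hGd
  have hGle : ∀ i, |G i| ≤ 4 * K / θ * N := by
    intro i
    have h0 := stepA hθ hθ1 hΦ hw hwg hg hG hψ hae hN0 hN hv0
    have h1 := stepA hθ hθ1 hΦ hw hwg hg hG hψ hae hN0 hN (hv i)
    rw [hψ0] at h0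
    rw [hψi] at h1
    have e : 4 * K / θ * N = 2 * (K * N) / θ + 2 * (K * N) / θ := by field_simp; ring
    rw [e]
    simp only [Fin.sum_univ_two] at h0 h1
    rw [abs_le] at *
    fin_cases i <;> simp at h0 h1 ⊢ <;> constructor <;> linarith [h0.1, h0.2, h1.1, h1.2]
  set K3 := K + 4 * K / θ with hK3
  have hK3pos : 0 < K3 := by positivity
  have hav : ∀ (i : Fin 2) (p : E2), p ∈ cTri → ∀ t : ℝ, 0 < t → t ≤ 1 →
      ∫ x in refTri, |g i x| * kr Φ p t x ≤ K3 * N * t ^ (θ - 1) := by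
    intro i p hp t ht ht1
    have h1 := abs_avg_le (G i) (kr_dens hΦ hp ht ht1) (hg i)
    have h2 := H_le hθ hθ1 hΦ (hg i) (hG i) hN0 (hN i) hp ht ht1
    have h4 : (1 : ℝ) ≤ t ^ (θ - 1) := Real.one_le_rpow_of_pos_of_le_one_of_nonpos ht ht1 (by linarith)
    have h5 : 4 * K / θ * N ≤ 4 * K / θ * N * t ^ (θ - 1) := le_mul_of_one_le_right (by positivity) h4
    have h6 := hGle i
    have e : K3 * N * t ^ (θ - 1) = K * N * t ^ (θ - 1) + 4 * K / θ * N * t ^ (θ - 1) := by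
      rw [hK3]; ring
    rw [e]
    change _ ≤ |G i| + ∫ x in refTri, |g i x - ∫ y in refTri, g i y * Φ y| * kr Φ p t x at h1
    linarith
  have stepB : ∀ p ∈ closure refTri, ∀ h : ℝ, 0 < h → h ≤ 1 →
      |(∫ x in refTri, w x * kr Φ p h x) - ψ p| ≤ 2 * (K3 * N) / θ * h ^ θ := by
    intro p hp h hh hh1
    have hpc := closure_sub_cTri hp
    refine oned (f := fun t => ∫ x in refTri, w x * kr Φ p t x) hθ (by positivity) hh hh1
      (fun t ht ht1 => deriv_t hΦ hw hwg hpc ht ht1) ?_ (lim_kr hΦ hw hψ hae hp)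
    intro t ht ht1
    refine (Finset.abs_sum_le_sum_abs _ _).trans ?_
    have hi : ∀ i, |∫ x in refTri, g i x * ((t⁻¹ * (x i - p i)) * kr Φ p t x)| ≤
        K3 * N * t ^ (θ - 1) := by
      intro i
      have h1 := weighted_le (kr_dens hΦ hpc ht ht1) (hg i) (kr_coord hΦ hpc ht i)
      rw [one_mul] at h1
      exact h1.trans (hav i p hpc t ht ht1)
    rw [Fin.sum_univ_two]
    linarith [hi 0, hi 1]
  rcases eq_or_ne x y with rfl | hxy
  · simp only [sub_self, abs_zero]; positivity
  have hxc := closure_sub_cTri hx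
  have hyc := closure_sub_cTri hy
  have hdpos : 0 < dist x y := dist_pos.2 hxy
  have hd2 := cTri_dist hxc hyc
  set d := dist x y with hd
  set h := d / 2 with hh
  have hhpos : 0 < h := by positivity
  have hh1 : h ≤ 1 := by linarith
  have hpath : ∀ s ∈ Icc (0 : ℝ) 1, x + s • (y - x) ∈ cTri := fun s hs =>
    mix_mem_c hxc hyc hs.1 hs.2
  have stepC : |(∫ z in refTri, w z * kr Φ y h z) - ∫ z in refTri, w z * kr Φ x h z| ≤
      2 * (d * (K3 * N * h ^ (θ - 1))) := by
    have key := Convex.norm_image_sub_le_of_norm_hasDerivWithin_le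
      (f := fun s : ℝ => ∫ z in refTri, w z * kr Φ (x + s • (y - x)) h z) (s := Icc (0 : ℝ) 1)
      (x := 0) (y := 1) (C := 2 * (d * (K3 * N * h ^ (θ - 1))))
      (fun s hs => (deriv_p hΦ hw hwg (hpath s hs) hhpos hh1).hasDerivWithinAt) ?_
      (convex_Icc 0 1) (by simp) (by simp)
    · simpa using key
    · intro s hs
      rw [Real.norm_eq_abs]
      refine (Finset.abs_sum_le_sum_abs _ _).trans ?_
      have hi : ∀ i, |∫ z in refTri, g i z * (((1 - h) * (y - x) i) *
          kr Φ (x + s • (y - x)) h z)| ≤ d * (K3 * N * h ^ (θ - 1)) := by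
        intro i
        have h1 := weighted_le (c := fun _ => (1 - h) * (y - x) i) (m := d)
          (kr_dens hΦ (hpath s hs) hhpos hh1) (hg i) ?_
        · exact h1.trans (mul_le_mul_of_nonneg_left (hav i _ (hpath s hs) h hhpos hh1) hdpos.le)
        · intro z _
          have h2 := coord_le_dist x y i
          rw [abs_mul, abs_of_nonneg (by linarith : 0 ≤ 1 - h)]
          simp only [PiLp.sub_apply]
          nlinarith [abs_nonneg (y i - x i)]
      rw [Fin.sum_univ_two]
      linarith [hi 0, hi 1]
  have hBx := stepB x hx h hhpos hh1
  have hBy := stepB y hy h hhpos hh1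
  have e1 : d * h ^ (θ - 1) = 2 * h ^ θ := by
    have : h ^ θ = h ^ (θ - 1) * h := by
      rw [← Real.rpow_add_one hhpos.ne']; congr 1; ring
    rw [this, hh]; ring
  have e2 : 2 * (d * (K3 * N * h ^ (θ - 1))) = 4 * K3 * N * h ^ θ := by
    linear_combination 2 * K3 * N * e1
  rw [e2] at stepC
  have hhd : h ^ θ ≤ d ^ θ := Real.rpow_le_rpow hhpos.le (by linarith) hθ.le
  have htot : |ψ x - ψ y| ≤ (4 * K3 / θ + 4 * K3) * h ^ θ * N := by
    have e3 : (4 * K3 / θ + 4 * K3) * h ^ θ * N =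
      2 * (K3 * N) / θ * h ^ θ + 2 * (K3 * N) / θ * h ^ θ + 4 * K3 * N * h ^ θ := by ring
    rw [e3]
    rw [abs_le] at *
    constructor <;> linarith [hBx.1, hBx.2, hBy.1, hBy.2, stepC.1, stepC.2]
  refine htot.trans ?_
  gcongr

lemma mem_closure_tri {p : E2} (hp : p ∈ cTri) : p ∈ closure refTri := by
  have hz : (!₂[1/4, 1/4] : E2) ∈ refTri := by
    refine ⟨?_, ?_, ?_⟩ <;> norm_num
  have hl : Tendsto (fun t : ℝ => p + t • ((!₂[1/4, 1/4] : E2) - p)) (𝓝[>] 0) (𝓝 p) := by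
    have : Continuous (fun t : ℝ => p + t • ((!₂[1/4, 1/4] : E2) - p)) := by fun_prop
    have h := this.tendsto 0
    simp only [zero_smul, add_zero] at h
    exact h.mono_left nhdsWithin_le_nhds
  refine mem_closure_of_tendsto hl ?_
  filter_upwards [Ioo_mem_nhdsGT (zero_lt_one' ℝ)] with t ht
  exact mix_mem hp hz ht.1 ht.2.le

/-- **Hölder-type bound on the reference triangle** (first step in the proof of
Lemma 3.4): for `0 < θ < 1/2` there is `C` such that every `w ∈ H^{1+θ}(T̂)` whose
continuous representative vanishes at the three vertices of the reference triangle
satisfies `|w(x) − w(y)| ≤ C |x − y|^θ |w|_{1+θ,T̂}` for all `x, y` in the closed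
reference triangle.  Here `g i` are the weak partial derivatives of `w` and `ψ` is the
continuous representative. -/
theorem holder_bound_refTri (θ : ℝ) (hθ0 : 0 < θ) (hθ : θ < 1 / 2) :
    ∃ C : ℝ, 0 < C ∧ ∀ (w : E2 → ℝ) (g : Fin 2 → E2 → ℝ) (ψ : E2 → ℝ),
      MemLp w 2 (volume.restrict refTri) →
      (∀ i, HasWeakPD refTri i w (g i)) →
      (∀ i, MemLp (g i) 2 (volume.restrict refTri)) →
      (∀ i, GagFin θ refTri (g i)) →
      ContinuousOn ψ (closure refTri) →
      (∀ᵐ x ∂(volume.restrict refTri), ψ x = w x) →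
      ψ 0 = 0 → ψ (EuclideanSpace.single 0 1) = 0 → ψ (EuclideanSpace.single 1 1) = 0 →
      ∀ x ∈ closure refTri, ∀ y ∈ closure refTri,
        |ψ x - ψ y| ≤ C * dist x y ^ θ *
          Real.sqrt (∑ i : Fin 2, gagSq θ refTri (g i)) := by
  obtain ⟨Φ, B, hΦ⟩ := exists_ker
  have hθ1 : θ < 1 := by linarith
  have hK := KH_pos hθ1 hΦ.Bpos
  refine ⟨4 * (KH θ B + 4 * KH θ B / θ) / θ + 4 * (KH θ B + 4 * KH θ B / θ), by positivity, ?_⟩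
  intro w g ψ hw hwg hg hG hψ hae h0 h1 h2 x hx y hy
  have hw' : Integrable w (volume.restrict refTri) := hw.integrable (by norm_num)
  have hg' : ∀ i, Integrable (g i) (volume.restrict refTri) :=
    fun i => (hg i).integrable (by norm_num)
  have hnn : ∀ i, 0 ≤ gagSq θ refTri (g i) := fun i =>
    integral_nonneg fun a => integral_nonneg fun b => by positivity
  set S := Real.sqrt (∑ i : Fin 2, gagSq θ refTri (g i)) with hS
  have hS2 : S ^ 2 = ∑ i : Fin 2, gagSq θ refTri (g i) :=
    Real.sq_sqrt (Finset.sum_nonneg fun i _ => hnn i)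
  have hS0 : 0 ≤ S := Real.sqrt_nonneg _
  set C := 4 * (KH θ B + 4 * KH θ B / θ) / θ + 4 * (KH θ B + 4 * KH θ B / θ)
  have hall : ∀ e : ℝ, 0 < e → |ψ x - ψ y| ≤ C * dist x y ^ θ * (S + e) := by
    intro e he
    refine core hθ0 hθ1 hΦ hw' hwg hg' hG hψ hae (by positivity) ?_ ?_ ?_ h0 ?_ hx hy
    · intro i
      have h3 : gagSq θ refTri (g i) ≤ S ^ 2 := by
        rw [hS2]
        exact Finset.single_le_sum (f := fun i => gagSq θ refTri (g i)) (fun i _ => hnn i)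
          (Finset.mem_univ i)
      nlinarith
    · exact mem_closure_tri (by simp [cTri])
    · intro i
      refine mem_closure_tri ?_
      fin_cases i <;> simp [cTri]
    · intro i
      fin_cases i
      · exact h1
      · exact h2
  have hlim : Tendsto (fun e : ℝ => C * dist x y ^ θ * (S + e)) (𝓝[>] 0)
      (𝓝 (C * dist x y ^ θ * S)) := by
    have hc : Continuous (fun e : ℝ => C * dist x y ^ θ * (S + e)) := by fun_prop
    have h := hc.tendsto 0
    simp only [add_zero] at h
    exact h.mono_left nhdsWithin_le_nhds
  refine ge_of_tendsto hlim ?_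
  filter_upwards [self_mem_nhdsWithin] with e he
  exact hall e he

end
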